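/- A finite poset P is sub-representable if and only if P is a flower, a co-flower, or a disjoint union of chains. -/

import Mathlib

def SubRepresentable (α : Type*) [PartialOrder α] : Prop :=
  ∃ g : Set α → Set α,
    (∀ P₁ P₂ : Set α, Nonempty (↥P₁ ↪o ↥P₂) ↔ g P₁ ⊆ g P₂) ∧
    ∀ P₁ : Set α, Nonempty (↥P₁ ↪o ↥(g P₁)) ∧ Nonempty (↥(g P₁) ↪o ↥P₁)
def IsFlower (α : Type*) [PartialOrder α] : Prop :=
  ∃ x : α, IsChain (· ≤ ·) {y : α | y < x} ∧
    IsAntichain (· ≤ ·) {y : α | x < y} ∧ ({y : α | x < y}).Nontrivial ∧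
    ∀ y : α, y < x ∨ y = x ∨ x < y

def IsDisjointUnionOfChains (α : Type*) [PartialOrder α] : Prop :=
  ∀ a b c : α, (a ≤ c ∨ c ≤ a) → (b ≤ c ∨ c ≤ b) → (a ≤ b ∨ b ≤ a)

/-!
In a sub-representable poset any two triples `{x, y, z}` with `x < y` and `z` incomparable to `x` or
`y` are isomorphic: `g {x, y, z}` has three elements, hence is the union of the images of a
two-element chain and a two-element antichain, which depend on nothing but the isomorphism types of
the pairs. So at most one of the shapes `V`, `Λ` and chain plus point occurs. If `V` occurs, each
non-maximal element is comparable to everything, which for finite posets containing a `V` means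
being a flower; dually for `Λ`; if neither occurs, the poset is a disjoint union of chains.

Conversely, embed every subset canonically into a fixed infinite model so that an embedding of
subsets forces an inclusion of ranges; pulling the ranges back along the canonical embedding of the
whole poset gives `g`. For flowers the model is a chain below an antichain, and the range is
determined by the numbers of non-maximal and of maximal elements. For disjoint unions of chains it
is a disjoint union of chains indexed by `ℕ`, and the range is the Young diagram of the chain sizes
in decreasing order.
-/

open Set Function

theorem nonempty_orderEmbedding_of_subset {α : Type*} [LE α] {S T : Set α} (h : S ⊆ T) :
    Nonempty (S ↪o T) :=
  ⟨Subrel.inclusionEmbedding (· ≤ ·) h⟩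

theorem nonempty_orderEmbedding_ofDual_preimage {α : Type*} [Preorder α] {S T : Set α}
    (h : Nonempty (S ↪o T)) :
    Nonempty (↥(OrderDual.ofDual ⁻¹' S) ↪o ↥(OrderDual.ofDual ⁻¹' T)) :=
  h.map OrderEmbedding.dual

theorem nonempty_orderEmbedding_pair {α : Type*} [PartialOrder α] {x y x' y' : α}
    (hle : x ≤ y ↔ x' ≤ y') (hge : y ≤ x ↔ y' ≤ x') :
    Nonempty (({x, y} : Set α) ↪o ({x', y'} : Set α)) := by
  classical
  refine ⟨.ofMapLEIff (fun z ↦ ⟨if z.1 = x then x' else y', by split_ifs <;> simp⟩) ?_⟩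
  rintro ⟨u, hu⟩ ⟨v, hv⟩
  rw [Subtype.mk_le_mk, Subtype.mk_le_mk]
  grind

theorem nonempty_relEmbedding_of_range_subset {α β γ : Type*} {r : α → α → Prop}
    {s : β → β → Prop} {t : γ → γ → Prop} {φ : r ↪r t} {ψ : s ↪r t} (h : range φ ⊆ range ψ) :
    Nonempty (r ↪r s) := by
  choose f hf using fun x ↦ h (mem_range_self x)
  refine ⟨⟨⟨f, fun x y hxy ↦ φ.injective ?_⟩, fun {x y} ↦ ?_⟩⟩
  · rw [← hf, ← hf, hxy]
  · rw [← ψ.map_rel_iff, ← φ.map_rel_iff]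
    exact iff_of_eq (congrArg₂ t (hf x) (hf y))

theorem nonempty_orderIso_fin {α : Type*} [PartialOrder α] [Finite α]
    (h : ∀ x y : α, x ≤ y ∨ y ≤ x) : Nonempty (α ≃o Fin (Nat.card α)) := by
  classical
  let : Fintype α := Fintype.ofFinite α
  let : LinearOrder α :=
    { ‹PartialOrder α› with le_total := h, toDecidableLE := Classical.decRel _ }
  exact ⟨(Fintype.orderIsoFinOfCardEq α Nat.card_eq_fintype_card.symm).symm⟩

theorem exists_equiv_fin_antitone {ι β : Type*} [Finite ι] [LinearOrder β] (s : ι → β) :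
    ∃ e : Fin (Nat.card ι) ≃ ι, Antitone (s ∘ e) := by
  let e := (Finite.equivFin ι).symm
  exact ⟨(Tuple.sort (OrderDual.toDual ∘ s ∘ e)).trans e,
    fun _ _ hij ↦ Tuple.monotone_sort (OrderDual.toDual ∘ s ∘ e) hij⟩

theorem card_not_isMax_le_card_not_isMax {α β : Type*} [Preorder α] [Preorder β]
    [Finite β] (f : α ↪o β) :
    Nat.card {x : α // ¬ IsMax x} ≤ Nat.card {x : β // ¬ IsMax x} :=
  Nat.card_le_card_of_injective (Subtype.map f fun _ ↦ mt f.strictMono.isMax_of_apply)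
    (Subtype.map_injective _ f.injective)

section Representation

variable {α : Type*} [PartialOrder α]

theorem SubRepresentable.dual (h : SubRepresentable α) : SubRepresentable αᵒᵈ := by
  obtain ⟨g, hsub, hembed⟩ := h
  have embeds_iff (S T : Set αᵒᵈ) : Nonempty (S ↪o T) ↔
      Nonempty (↥(OrderDual.toDual ⁻¹' S) ↪o ↥(OrderDual.toDual ⁻¹' T)) :=
    ⟨nonempty_orderEmbedding_ofDual_preimage, nonempty_orderEmbedding_ofDual_preimage⟩
  exact ⟨fun S ↦ OrderDual.ofDual ⁻¹' g (OrderDual.toDual ⁻¹' S),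
    fun S T ↦ (embeds_iff S T).trans (hsub _ _),
    fun S ↦ (hembed (OrderDual.toDual ⁻¹' S)).imp nonempty_orderEmbedding_ofDual_preimage
      nonempty_orderEmbedding_ofDual_preimage⟩

theorem subRepresentable_of_relEmbedding {β : Type*} {r : β → β → Prop}
    (φ : ∀ S : Set α, ((· ≤ ·) : S → S → Prop) ↪r r)
    (hφ : ∀ S T : Set α, Nonempty (S ↪o T) → range (φ S) ⊆ range (φ T)) : SubRepresentable α := by
  let ψ : ((· ≤ ·) : α → α → Prop) ↪r r :=
    OrderIso.Set.univ.symm.toOrderEmbedding.trans (φ univ)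
  have range_subset (S : Set α) : range (φ S) ⊆ range ψ :=
    (hφ S univ (nonempty_orderEmbedding_of_subset S.subset_univ)).trans
      (OrderIso.Set.univ.symm.surjective.range_comp (φ univ)).ge
  let g (S : Set α) : Set α := ψ ⁻¹' range (φ S)
  have range_restrict (S : Set α) :
      range ((OrderEmbedding.subtype (· ∈ g S)).trans ψ) = range (φ S) :=
    calc range (ψ ∘ ((↑) : g S → α)) = ψ '' g S := by rw [range_comp, Subtype.range_coe]
      _ = range (φ S) := image_preimage_eq_of_subset (range_subset S)
  have embeds (S : Set α) : Nonempty (S ↪o g S) :=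
    nonempty_relEmbedding_of_range_subset (range_restrict S).ge
  have embeds' (S : Set α) : Nonempty (g S ↪o S) :=
    nonempty_relEmbedding_of_range_subset (range_restrict S).le
  refine ⟨g, fun S T ↦ ⟨fun h ↦ preimage_mono (hφ S T h), fun h ↦ ?_⟩,
    fun S ↦ ⟨embeds S, embeds' S⟩⟩
  obtain ⟨i⟩ := nonempty_orderEmbedding_of_subset h
  exact (embeds S).elim fun e ↦ (embeds' T).map fun e' ↦ e.trans (i.trans e')

end Representation

/-- Finite weak flowers are the posets that embed into a finite flower: a chain below an antichain,
either of which may be empty or a singleton. Unlike being a flower, this passes to subsets. -/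
def IsWeakFlower (α : Type*) [PartialOrder α] : Prop :=
  ∀ ⦃x : α⦄, ¬ IsMax x → ∀ y, x ≤ y ∨ y ≤ x

section WeakFlower

variable {α β : Type*} [PartialOrder α] [PartialOrder β]

theorem IsFlower.isWeakFlower (h : IsFlower α) : IsWeakFlower α := by
  obtain ⟨c, hchain, hanti, -, hc⟩ := h
  intro x hx y
  obtain ⟨w, hxw⟩ := not_isMax_iff.1 hx
  rcases hc x with hxc | rfl | hcx
  · rcases hc y with hyc | rfl | hcy
    · exact hchain.total hxc hyc
    · exact .inl hxc.le
    · exact .inl (hxc.trans hcy).le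
  · exact (hc y).elim (.inr ·.le) fun hy ↦ .inl (hy.elim Eq.ge le_of_lt)
  · exact absurd hxw.le (hanti hcx (hcx.trans hxw) hxw.ne)

theorem IsWeakFlower.of_orderEmbedding (h : IsWeakFlower β) (f : α ↪o β) : IsWeakFlower α := by
  intro x hx y
  simpa using h (mt f.strictMono.isMax_of_apply hx) (f y)

theorem IsWeakFlower.isMax_of_incompRel (h : IsWeakFlower α) {x y : α}
    (hxy : IncompRel (· ≤ ·) x y) : IsMax x := by
  by_contra hx
  exact (h hx y).elim hxy.1 hxy.2

theorem IsWeakFlower.isFlower [Finite α] (h : IsWeakFlower α) {a b c : α} (hab : a < b)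
    (hbc : IncompRel (· ≤ ·) b c) : IsFlower α := by
  obtain ⟨x, hx⟩ := (toFinite {x : α | ¬ IsMax x}).exists_maximal ⟨a, hab.not_isMax⟩
  have isMax_of_gt {y : α} (hxy : x < y) : IsMax y := by
    by_contra hy
    exact hx.not_gt hy hxy
  have gt_of_isMax {y : α} (hy : IsMax y) : x < y := by
    refine ((h hx.prop y).resolve_right fun hyx ↦ ?_).lt_of_ne ?_
    · exact hx.prop (hy.eq_of_le hyx ▸ hy)
    · rintro rfl
      exact hx.prop hy
  refine ⟨x, fun y hy z _ _ ↦ h hy.not_isMax z, fun y hy z _ hne hle ↦ ?_,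
    ⟨b, gt_of_isMax (h.isMax_of_incompRel hbc), c, gt_of_isMax (h.isMax_of_incompRel hbc.symm),
      hbc.ne⟩, fun y ↦ ?_⟩
  · exact hne ((isMax_of_gt hy).eq_of_le hle)
  · rcases h hx.prop y with hxy | hyx
    · exact .inr (hxy.eq_or_lt.imp_left .symm)
    · exact hyx.lt_or_eq.imp_right .inl

theorem IsWeakFlower.card_isMax_le_card_isMax [Finite β] (h : IsWeakFlower β) (f : α ↪o β) :
    Nat.card {x : α // IsMax x} ≤ Nat.card {x : β // IsMax x} := by
  -- A unique maximal element of `α` need not be sent to a maximal element, unlike one of several.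
  rcases subsingleton_or_nontrivial {x : α // IsMax x} with _ | _
  · choose m hm using fun y : β ↦ (finite_univ (α := β)).exists_le_maximal (mem_univ y)
    have isMax_m (y : β) : IsMax (m y) := fun _ ↦ (hm y).2.2 (mem_univ _)
    exact Nat.card_le_card_of_injective (β := {x : β // IsMax x})
      (fun x ↦ ⟨m (f x), isMax_m (f x)⟩) (injective_of_subsingleton _)
  · have isMax_apply {x : α} (hx : IsMax x) : IsMax (f x) := by
      obtain ⟨⟨y, hy⟩, hne⟩ := exists_ne (⟨x, hx⟩ : {x : α // IsMax x})
      have hyx : y ≠ x := fun h ↦ hne (Subtype.ext h)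
      refine h.isMax_of_incompRel (y := f y) ⟨fun hle ↦ ?_, fun hle ↦ ?_⟩
      · exact hyx (hx.eq_of_le (f.le_iff_le.1 hle)).symm
      · exact hyx (hy.eq_of_le (f.le_iff_le.1 hle))
    exact Nat.card_le_card_of_injective (Subtype.map f fun _ ↦ isMax_apply)
      (Subtype.map_injective _ f.injective)

theorem IsWeakFlower.nonempty_relIso_sumLex (h : IsWeakFlower α) :
    Nonempty (((· ≤ ·) : α → α → Prop) ≃r
      Sum.Lex ((· ≤ ·) : {x : α // ¬ IsMax x} → {x : α // ¬ IsMax x} → Prop)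
        ((· = ·) : {x : α // IsMax x} → {x : α // IsMax x} → Prop)) := by
  classical
  let e : {x : α // ¬ IsMax x} ⊕ {x : α // IsMax x} ≃ α :=
    (Equiv.sumComm _ _).trans (Equiv.sumCompl IsMax)
  suffices ∀ p q, e p ≤ e q ↔ Sum.Lex (· ≤ ·) (· = ·) p q from ⟨RelIso.symm ⟨e, this _ _⟩⟩
  rintro (x | x) (y | y) <;> change (x : α) ≤ y ↔ _
  · exact Subtype.coe_le_coe.trans Sum.lex_inl_inl.symm
  · exact iff_of_true ((h x.2 y).resolve_right fun hyx ↦ x.2 (y.2.eq_of_le hyx ▸ y.2)) (.sep x y)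
  · exact iff_of_false (fun hxy ↦ y.2 (x.2.eq_of_le hxy ▸ x.2)) Sum.lex_inr_inl
  · exact ⟨fun hxy ↦ .inr (Subtype.ext (x.2.eq_of_le hxy)),
      fun hxy ↦ (congrArg Subtype.val (Sum.lex_inr_inr.1 hxy)).le⟩

theorem IsWeakFlower.exists_relEmbedding [Finite α] (h : IsWeakFlower α) :
    ∃ φ : ((· ≤ ·) : α → α → Prop) ↪r Sum.Lex ((· ≤ ·) : ℕ → ℕ → Prop) ((· = ·) : ℕ → ℕ → Prop),
      range φ = Sum.inl '' Iio (Nat.card {x : α // ¬ IsMax x}) ∪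
        Sum.inr '' Iio (Nat.card {x : α // IsMax x}) := by
  obtain ⟨e⟩ := h.nonempty_relIso_sumLex
  obtain ⟨low⟩ := nonempty_orderIso_fin fun x y : {x : α // ¬ IsMax x} ↦ h x.2 y
  let high := Finite.equivFin {x : α // IsMax x}
  let ψ := RelEmbedding.sumLexMap (t := ((· = ·) : {x : α // IsMax x} → _ → Prop))
    (u := ((· = ·) : ℕ → ℕ → Prop)) (low.toOrderEmbedding.trans (Fin.valOrderEmb _))
    ⟨high.toEmbedding.trans Fin.valEmbedding, EmbeddingLike.apply_eq_iff_eq _⟩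
  refine ⟨e.toRelEmbedding.trans ψ, ?_⟩
  calc range (ψ ∘ e)
    _ = range (Sum.elim (Sum.inl ∘ Fin.val ∘ low) (Sum.inr ∘ Fin.val ∘ high)) :=
      e.surjective.range_comp ψ
    _ = Sum.inl '' range (Fin.val ∘ low) ∪ Sum.inr '' range (Fin.val ∘ high) := by
      rw [Sum.elim_range, range_comp Sum.inl, range_comp Sum.inr]
    _ = _ := by
      rw [low.surjective.range_comp, high.surjective.range_comp, Fin.range_val, Fin.range_val]

theorem IsWeakFlower.subRepresentable [Finite α] (h : IsWeakFlower α) : SubRepresentable α := by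
  choose φ hφ using fun S : Set α ↦
    (h.of_orderEmbedding (OrderEmbedding.subtype (· ∈ S))).exists_relEmbedding
  refine subRepresentable_of_relEmbedding φ fun S T ⟨f⟩ ↦ ?_
  rw [hφ, hφ]
  have hT : IsWeakFlower T := h.of_orderEmbedding (OrderEmbedding.subtype (· ∈ T))
  exact union_subset_union
    (image_mono <| Iio_subset_Iio <| card_not_isMax_le_card_not_isMax f)
    (image_mono <| Iio_subset_Iio <| hT.card_isMax_le_card_isMax f)

end WeakFlower

theorem encard_eq_of_nonempty_embedding {α : Type*} {S T : Set α} (hST : Nonempty (S ↪ T))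
    (hTS : Nonempty (T ↪ S)) : S.encard = T.encard :=
  hST.elim fun f ↦ hTS.elim fun f' ↦ (f.antisymm f').elim encard_congr

section Triples

variable {α : Type*} [PartialOrder α]

theorem isWeakFlower_triple {a b c : α} (hab : a ≤ b) (hac : a ≤ c)
    (hbc : IncompRel (· ≤ ·) b c) : IsWeakFlower ({a, b, c} : Set α) := by
  rintro ⟨x, hx⟩ hmax ⟨y, hy⟩
  obtain ⟨⟨w, hw⟩, hxw⟩ := not_isMax_iff.1 hmax
  rw [Subtype.mk_lt_mk] at hxw
  rw [Subtype.mk_le_mk, Subtype.mk_le_mk]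
  obtain rfl : x = a := by grind [IncompRel]
  grind

variable {g : Set α → Set α} {x y z u x' y' z' u' : α}

theorem image_triple_eq_union (hsub : ∀ S T : Set α, Nonempty (S ↪o T) ↔ g S ⊆ g T)
    (hcard : ∀ S, (g S).encard = S.encard) (hxy : x < y) (hu : u ∈ ({x, y} : Set α))
    (huz : IncompRel (· ≤ ·) u z) : g {x, y, z} = g {x, y} ∪ g {u, z} := by
  have hunion : g {x, y} ∪ g {u, z} ⊆ g {x, y, z} := union_subset
    ((hsub _ _).1 (nonempty_orderEmbedding_of_subset (by grind)))
    ((hsub _ _).1 (nonempty_orderEmbedding_of_subset (by grind)))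
  have not_subset : ¬ g {x, y} ⊆ g {u, z} := by
    rw [← hsub]
    rintro ⟨f⟩
    have hlt : (f ⟨x, by simp⟩ : α) < f ⟨y, by simp⟩ := f.lt_iff_lt.2 hxy
    grind [IncompRel, (f ⟨x, by simp⟩).2, (f ⟨y, by simp⟩).2]
  have htriple : (g {x, y, z}).encard ≤ 3 := by
    rw [hcard]
    calc ({x, y, z} : Set α).encard = ({z, x, y} : Set α).encard := by congr 1; grind
      _ ≤ ({x, y} : Set α).encard + 1 := encard_insert_le _ _
      _ = 3 := by rw [encard_pair hxy.ne]; norm_num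
  have hpair : (g {u, z}).encard = 2 := by rw [hcard, encard_pair huz.ne]
  have hfin : (g {u, z}).Finite := finite_of_encard_eq_coe hpair
  have hlt : 2 < (g {x, y} ∪ g {u, z}).encard :=
    hpair ▸ hfin.encard_lt_encard (ssubset_union_right_iff.2 not_subset)
  refine ((finite_of_encard_le_coe htriple).eq_of_subset_of_encard_le' hunion ?_).symm
  exact htriple.trans (Order.add_one_le_of_lt hlt)

theorem nonempty_orderEmbedding_triple (hsub : ∀ S T : Set α, Nonempty (S ↪o T) ↔ g S ⊆ g T)
    (hcard : ∀ S, (g S).encard = S.encard) (hxy : x < y) (hu : u ∈ ({x, y} : Set α))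
    (huz : IncompRel (· ≤ ·) u z) (hxy' : x' < y') (hu' : u' ∈ ({x', y'} : Set α))
    (huz' : IncompRel (· ≤ ·) u' z') :
    Nonempty (({x, y, z} : Set α) ↪o ({x', y', z'} : Set α)) := by
  rw [hsub, image_triple_eq_union hsub hcard hxy hu huz,
    image_triple_eq_union hsub hcard hxy' hu' huz']
  refine union_subset_union ((hsub _ _).1 ?_) ((hsub _ _).1 ?_)
  · exact nonempty_orderEmbedding_pair (iff_of_true hxy.le hxy'.le)
      (iff_of_false hxy.not_ge hxy'.not_ge)
  · exact nonempty_orderEmbedding_pair (iff_of_false huz.1 huz'.1) (iff_of_false huz.2 huz'.2)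

theorem SubRepresentable.isWeakFlower (h : SubRepresentable α) {a b c : α} (hab : a < b)
    (hac : a < c) (hbc : IncompRel (· ≤ ·) b c) : IsWeakFlower α := by
  obtain ⟨g, hsub, hembed⟩ := h
  have hcard (S : Set α) : (g S).encard = S.encard :=
    (encard_eq_of_nonempty_embedding ((hembed S).1.map (·.toEmbedding))
      ((hembed S).2.map (·.toEmbedding))).symm
  intro x hx z
  by_contra! hxz
  obtain ⟨y, hxy⟩ := not_isMax_iff.1 hx
  obtain ⟨f⟩ := nonempty_orderEmbedding_triple hsub hcard hxy (mem_insert x _) hxz hab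
    (mem_insert_of_mem a rfl) hbc
  have htriple := (isWeakFlower_triple hab.le hac.le hbc).of_orderEmbedding f
  have hmax : IsMax (⟨x, by simp⟩ : ({x, y, z} : Set α)) :=
    htriple.isMax_of_incompRel (y := ⟨z, by simp⟩) hxz
  exact hmax.not_lt (b := ⟨y, by simp⟩) hxy

theorem SubRepresentable.isChain_Ici [Finite α] (h : SubRepresentable α) (hα : ¬ IsFlower α)
    (a : α) : IsChain (· ≤ ·) (Ici a) := by
  intro b hab c hac _
  by_contra! hbc
  have hlt : a < b := hab.lt_of_ne (by rintro rfl; exact hbc.1 hac)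
  have hlt' : a < c := hac.lt_of_ne (by rintro rfl; exact hbc.2 hab)
  exact hα ((h.isWeakFlower hlt hlt' hbc).isFlower hlt hbc)

end Triples

theorem isDisjointUnionOfChains_of_isChain {α : Type*} [PartialOrder α]
    (hIci : ∀ a : α, IsChain (· ≤ ·) (Ici a)) (hIic : ∀ a : α, IsChain (· ≤ ·) (Iic a)) :
    IsDisjointUnionOfChains α := by
  rintro a b c (hac | hca) (hbc | hcb)
  · exact (hIic c).total hac hbc
  · exact .inl (hac.trans hcb)
  · exact .inr (hbc.trans hca)
  · exact (hIci c).total hca hcb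

/-- The order on `ℕ × ℕ` in which it is the disjoint union of the chains `{i} × ℕ`. In it, the
initial segments of lengths `n 0 ≥ n 1 ≥ ⋯` of these chains form a lower set for the product
order. -/
def ChainSumLE (p q : ℕ × ℕ) : Prop :=
  p.1 = q.1 ∧ p.2 ≤ q.2

section ChainSum

variable {α β : Type*} [PartialOrder α] [PartialOrder β]

theorem chainSumLE_or_chainSumLE {p q : ℕ × ℕ} (h : p.1 = q.1) :
    ChainSumLE p q ∨ ChainSumLE q p :=
  (le_total p.2 q.2).imp (.intro h) (.intro h.symm)

theorem IsDisjointUnionOfChains.of_orderEmbedding (h : IsDisjointUnionOfChains β) (f : α ↪o β) :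
    IsDisjointUnionOfChains α := by
  intro a b c
  simpa using h (f a) (f b) (f c)

theorem IsDisjointUnionOfChains.exists_antitone_card_fiber [Finite α]
    (h : IsDisjointUnionOfChains α) : ∃ (N : ℕ) (c : α → Fin N),
      (∀ x y, c x = c y ↔ x ≤ y ∨ y ≤ x) ∧ Antitone fun i ↦ Nat.card {x // c x = i} := by
  let s : Setoid α :=
    ⟨fun x y ↦ x ≤ y ∨ y ≤ x, fun _ ↦ .inl le_rfl, .symm, fun hxy hyz ↦ h _ _ _ hxy hyz.symm⟩
  obtain ⟨e, he⟩ := exists_equiv_fin_antitone fun q : Quotient s ↦ Nat.card {x // ⟦x⟧ = q}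
  refine ⟨_, fun x ↦ e.symm ⟦x⟧, fun x y ↦ e.symm.injective.eq_iff.trans Quotient.eq, ?_⟩
  simpa only [Equiv.symm_apply_eq, comp_def] using he

theorem IsDisjointUnionOfChains.exists_orderIso_sigma [Finite α] (h : IsDisjointUnionOfChains α) :
    ∃ (N : ℕ) (n : Fin N → ℕ), Antitone n ∧ Nonempty ((Σ i, Fin (n i)) ≃o α) := by
  obtain ⟨N, c, hc, hanti⟩ := h.exists_antitone_card_fiber
  have nonempty_height (i) : Nonempty ({x // c x = i} ≃o Fin (Nat.card {x // c x = i})) :=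
    nonempty_orderIso_fin fun x y ↦ (hc x y).1 (x.2.trans y.2.symm)
  let height i := (nonempty_height i).some
  let e : (Σ i, Fin (Nat.card {x // c x = i})) ≃ α :=
    (Equiv.sigmaCongrRight fun i ↦ (height i).symm.toEquiv).trans (Equiv.sigmaFiberEquiv c)
  have c_apply (p) : c (e p) = p.1 := ((height p.1).symm p.2).2
  refine ⟨N, _, hanti, ⟨e, @fun ⟨i, k⟩ ⟨j, l⟩ ↦ ?_⟩⟩
  rcases eq_or_ne i j with rfl | hij
  · rw [Sigma.mk_le_mk_iff]
    exact (height i).symm.le_iff_le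
  · refine iff_of_false (fun hle ↦ hij ?_) fun hle ↦ hij (Sigma.le_def.1 hle).1
    exact (c_apply ⟨i, k⟩).symm.trans (((hc _ _).2 (.inl hle)).trans (c_apply ⟨j, l⟩))

theorem exists_sigma_relEmbedding_chainSumLE {N : ℕ} {n : Fin N → ℕ} (hn : Antitone n) :
    ∃ φ : ((· ≤ ·) : (Σ i, Fin (n i)) → (Σ i, Fin (n i)) → Prop) ↪r ChainSumLE,
      IsLowerSet (range φ) := by
  have hinj : Injective fun p : Σ i, Fin (n i) ↦ ((p.1 : ℕ), (p.2 : ℕ)) := by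
    rintro ⟨i, k⟩ ⟨j, l⟩ h
    obtain rfl : i = j := Fin.ext (congrArg Prod.fst h)
    obtain rfl : k = l := Fin.ext (congrArg Prod.snd h)
    rfl
  refine ⟨⟨⟨_, hinj⟩, @fun ⟨i, k⟩ ⟨j, l⟩ ↦ ⟨fun ⟨hij, hkl⟩ ↦ ?_, ?_⟩⟩, ?_⟩
  · obtain rfl : i = j := Fin.ext hij
    exact Sigma.mk_le_mk_iff.2 hkl
  · rintro ⟨_, _, _, hkl⟩
    exact ⟨rfl, hkl⟩
  · rintro _ ⟨j, m⟩ hle ⟨⟨i, k⟩, rfl⟩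
    have hji : j ≤ i := hle.1
    let j' : Fin N := ⟨j, hji.trans_lt i.2⟩
    exact ⟨⟨j', ⟨m, (hle.2.trans_lt k.2).trans_le (hn (a := j') hji)⟩⟩, rfl⟩

theorem IsDisjointUnionOfChains.exists_relEmbedding [Finite α] (h : IsDisjointUnionOfChains α) :
    ∃ φ : ((· ≤ ·) : α → α → Prop) ↪r ChainSumLE, IsLowerSet (range φ) := by
  obtain ⟨N, n, hn, ⟨e⟩⟩ := h.exists_orderIso_sigma
  obtain ⟨φ, hφ⟩ := exists_sigma_relEmbedding_chainSumLE hn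
  exact ⟨e.symm.toOrderEmbedding.trans φ, (e.symm.surjective.range_comp φ).symm ▸ hφ⟩

variable {φ : ((· ≤ ·) : α → α → Prop) ↪r ChainSumLE} {ψ : ((· ≤ ·) : β → β → Prop) ↪r ChainSumLE}

theorem snd_le_snd_apply (hφ : IsLowerSet (range φ)) (f : α ↪o β) (x : α) :
    (φ x).2 ≤ (ψ (f x)).2 := by
  induction hn : (φ x).2 generalizing x with
  | zero => exact Nat.zero_le _
  | succ n ih =>
    obtain ⟨y, hy⟩ : ((φ x).1, n) ∈ range φ :=
      hφ (a := φ x) ⟨le_rfl, by simp [hn]⟩ (mem_range_self x)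
    have hyx : y ≤ x := by rw [← φ.map_rel_iff, hy]; exact ⟨rfl, by simp [hn]⟩
    have hxy : ¬ x ≤ y := by rw [← φ.map_rel_iff, hy]; simp [ChainSumLE, hn]
    have hrow : (ψ (f y)).1 = (ψ (f x)).1 := (ψ.map_rel_iff.2 (f.le_iff_le.2 hyx)).1
    have hlt : (ψ (f y)).2 < (ψ (f x)).2 := by
      by_contra! hle
      exact hxy (f.le_iff_le.1 (ψ.map_rel_iff.1 ⟨hrow.symm, hle⟩))
    exact (ih y (by rw [hy])).trans_lt hlt

theorem range_subset_range_of_orderEmbedding (hφ : IsLowerSet (range φ))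
    (hψ : IsLowerSet (range ψ)) (f : α ↪o β) : range φ ⊆ range ψ := by
  rintro ⟨i, n⟩ hin
  -- The `i + 1` elements at height `n` in rows `0, …, i` of `φ` are sent to distinct rows of `ψ`,
  -- so one of these rows is at least `i`.
  have hcolumn (k : Fin (i + 1)) : ((k : ℕ), n) ∈ range φ :=
    hφ (a := (i, n)) ⟨Fin.is_le k, le_rfl⟩ hin
  choose x hx using hcolumn
  have row_injective : Injective fun k ↦ (ψ (f (x k))).1 := by
    intro k l hkl
    have hcomp := chainSumLE_or_chainSumLE hkl
    rw [ψ.map_rel_iff, ψ.map_rel_iff, f.le_iff_le, f.le_iff_le, ← φ.map_rel_iff,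
      ← φ.map_rel_iff, hx, hx] at hcomp
    exact Fin.ext (hcomp.elim And.left fun h ↦ h.1.symm)
  obtain ⟨k, hk⟩ : ∃ k, i ≤ (ψ (f (x k))).1 := by
    by_contra! hlt
    have hcard := Fintype.card_le_of_injective (fun k ↦ (⟨_, hlt k⟩ : Fin i))
      fun k l hkl ↦ row_injective (congrArg Fin.val hkl)
    simp at hcard
  have hn : n ≤ (ψ (f (x k))).2 := by simpa only [hx] using snd_le_snd_apply (ψ := ψ) hφ f (x k)
  exact hψ ⟨hk, hn⟩ (mem_range_self _)

theorem IsDisjointUnionOfChains.subRepresentable [Finite α] (h : IsDisjointUnionOfChains α) :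
    SubRepresentable α := by
  choose φ hφ using fun S : Set α ↦
    (h.of_orderEmbedding (OrderEmbedding.subtype (· ∈ S))).exists_relEmbedding
  exact subRepresentable_of_relEmbedding φ fun S T ⟨f⟩ ↦
    range_subset_range_of_orderEmbedding (hφ S) (hφ T) f

end ChainSum

theorem finite_subrep_iff (α : Type*) [PartialOrder α] [Finite α] :
    SubRepresentable α ↔ IsFlower α ∨ IsFlower αᵒᵈ ∨ IsDisjointUnionOfChains α := by
  constructor
  · intro h
    by_contra! ⟨hflower, hcoflower, hchains⟩
    exact hchains (isDisjointUnionOfChains_of_isChain (h.isChain_Ici hflower) fun a ↦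
      (h.dual.isChain_Ici hcoflower (OrderDual.toDual a)).symm)
  · rintro (h | h | h)
    · exact h.isWeakFlower.subRepresentable
    · exact h.isWeakFlower.subRepresentable.dual
    · exact h.subRepresentable
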